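/- Let n ≥ 2 be an integer, E a compact connected subset of the closed unit disk of ℂ, and D_1, …, D_n pairwise disjoint nonempty open connected subsets of ℂ whose union equals {z : |z| < 1} \ E. Then for every k ∈ {1, …, n}, the set α_k := (frontier D_k) \ E is contained in the unit circle T, is open in the subspace topology of T, and is connected (hence α_k is a single, possibly empty, open arc of T). -/

import Mathlib

open Complex Metric Set

/-!
A component `D` of the open disk minus `E` is relatively clopen there. As the disk is convex, near a
point of `closure D \ E` the whole closed disk belongs to `closure D`. Hence `closure D \ E` is
relatively open in the closed disk and path connected.

It remains to see that two points `a`, `b` of the circle which are joined by a path `γ` in the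
closed disk minus `E` are already joined along the circle minus `E`. Otherwise `E` contains points
`z`, `w` of the two open arcs between `a` and `b`, so the cross ratio of `a, b, z, w` is negative.
On the other hand `γ s - x` has a continuous logarithm `g (s, x)` on `[0, 1] × E`, and
`g (0, z) - g (0, w) - (g (1, z) - g (1, w))` is a logarithm of the cross ratio. Computing this
double difference with principal logarithms, first along `E` and then along `γ`, gives two values
which are complex conjugates of each other. So it is real, and the cross ratio is positive.
-/

open scoped Topology ComplexOrder ComplexConjugate

section RelativelyClopen

variable {X : Type*} [TopologicalSpace X]

lemma closure_inter_iUnion_of_pairwise_disjoint {ι : Type*} {D : ι → Set X}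
    (hD : ∀ k, IsOpen (D k)) (hdisj : Pairwise (Function.onFun Disjoint D)) (k : ι) :
    closure (D k) ∩ ⋃ j, D j = D k := by
  refine Subset.antisymm (fun x ⟨hx, hx'⟩ ↦ ?_)
    (subset_inter subset_closure (subset_iUnion D k))
  obtain ⟨j, hj⟩ := mem_iUnion.1 hx'
  rcases eq_or_ne k j with rfl | hkj
  · exact hj
  · exact absurd hj (((hdisj hkj).closure_left (hD j)).notMem_of_mem_left hx)

lemma frontier_diff_eq_closure_diff_inter_frontier {D U E : Set X} (hD : IsOpen D)
    (hDcl : closure D ∩ (U \ E) = D) (hU : IsOpen U) :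
    frontier D \ E = (closure D \ E) ∩ frontier U := by
  have hDU : D ⊆ U \ E := fun x hx ↦ (hDcl.superset hx).2
  rw [hD.frontier_eq, hU.frontier_eq]
  ext x
  constructor
  · rintro ⟨⟨hx, hxD⟩, hxE⟩
    exact ⟨⟨hx, hxE⟩, closure_mono (hDU.trans sdiff_subset) hx,
      fun hxU ↦ hxD (hDcl.subset ⟨hx, hxU, hxE⟩)⟩
  · rintro ⟨⟨hx, hxE⟩, -, hxU⟩
    exact ⟨⟨hx, fun hxD ↦ hxU (hDU hxD).1⟩, hxE⟩

end RelativelyClopen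

section Convex

variable {X : Type*} [AddCommGroup X] [Module ℝ X] [TopologicalSpace X] [IsTopologicalAddGroup X]
  [ContinuousSMul ℝ X] [LocallyConvexSpace ℝ X] {D U E : Set X}

lemma exists_convex_mem_nhdsWithin_subset_closure_diff (hE : IsClosed E) (hU : Convex ℝ U)
    (hD : IsOpen D) (hDcl : closure D ∩ (U \ E) = D) {a : X} (ha : a ∈ closure D \ E) :
    ∃ C ∈ 𝓝[closure U] a, Convex ℝ C ∧ C ⊆ closure D \ E := by
  obtain ⟨B, ⟨hBa, hB⟩, hBE⟩ := (LocallyConvexSpace.convex_basis (𝕜 := ℝ) a).mem_iff.1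
    (hE.isOpen_compl.mem_nhds ha.2)
  have hBE' : interior B ⊆ Eᶜ := interior_subset.trans hBE
  have hBU : interior B ∩ U ⊆ D := by
    refine (hB.interior.inter hU).isPreconnected.subset_of_closure_inter_subset hD ?_
      fun x ⟨hx, hxB, hxU⟩ ↦ hDcl.subset ⟨hx, hxU, hBE' hxB⟩
    obtain ⟨d, hdB, hdD⟩ := mem_closure_iff_nhds.1 ha.1 _ (interior_mem_nhds.2 hBa)
    exact ⟨d, ⟨hdB, (hDcl.superset hdD).2.1⟩, hdD⟩
  exact ⟨interior B ∩ closure U,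
    Filter.inter_mem (mem_nhdsWithin_of_mem_nhds (interior_mem_nhds.2 hBa)) self_mem_nhdsWithin,
    hB.interior.inter hU.closure,
    fun x hx ↦ ⟨closure_mono hBU (isOpen_interior.inter_closure hx), hBE' hx.1⟩⟩

lemma exists_isOpen_closure_diff_eq_inter_closure (hE : IsClosed E) (hU : Convex ℝ U)
    (hD : IsOpen D) (hDcl : closure D ∩ (U \ E) = D) :
    ∃ O : Set X, IsOpen O ∧ closure D \ E = O ∩ closure U := by
  have hDU : closure D ⊆ closure U := closure_mono fun x hx ↦ (hDcl.superset hx).2.1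
  have hnhds : ∀ a ∈ closure D \ E, closure D \ E ∪ (closure U)ᶜ ∈ 𝓝 a := fun a ha ↦ by
    obtain ⟨C, hCa, -, hCK⟩ := exists_convex_mem_nhdsWithin_subset_closure_diff hE hU hD hDcl ha
    filter_upwards [mem_nhdsWithin_iff_eventually.1 hCa] with x hx
    exact (em' (x ∈ closure U)).symm.imp (fun hxU ↦ hCK (hx hxU)) id
  exact ⟨interior (closure D \ E ∪ (closure U)ᶜ), isOpen_interior, Subset.antisymm
    (fun a ha ↦ ⟨mem_interior_iff_mem_nhds.2 (hnhds a ha), hDU ha.1⟩)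
    fun a ⟨ha, haU⟩ ↦ (interior_subset ha).resolve_right (not_not.2 haU)⟩

lemma isPathConnected_closure_diff (hE : IsClosed E) (hU : Convex ℝ U) (hD : IsOpen D)
    (hDconn : IsConnected D) (hDcl : closure D ∩ (U \ E) = D) :
    IsPathConnected (closure D \ E) := by
  have hDK : D ⊆ closure D \ E := fun x hx ↦ ⟨subset_closure hx, (hDcl.superset hx).2.2⟩
  have hDU : D ⊆ U := fun x hx ↦ (hDcl.superset hx).2.1
  obtain ⟨c, hc⟩ := hDconn.nonempty
  refine ⟨c, hDK hc, fun {a} ha ↦ ?_⟩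
  obtain ⟨C, hCa, hC, hCK⟩ := exists_convex_mem_nhdsWithin_subset_closure_diff hE hU hD hDcl ha
  have haC : a ∈ C := mem_of_mem_nhdsWithin (closure_mono hDU ha.1) hCa
  have : (𝓝[D] a).NeBot := mem_closure_iff_nhdsWithin_neBot.1 ha.1
  obtain ⟨d, hdC, hdD⟩ : (C ∩ D).Nonempty :=
    Filter.nonempty_of_mem
      (Filter.inter_mem (nhdsWithin_mono a (hDU.trans subset_closure) hCa) self_mem_nhdsWithin)
  have hcd : JoinedIn D c d := (hD.isConnected_iff_isPathConnected.1 hDconn).joinedIn c hc d hdD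
  have hda : JoinedIn C d a := (hC.isPathConnected ⟨a, haC⟩).joinedIn d hdC a haC
  exact (hcd.mono hDK).trans (hda.mono hCK)

lemma subset_closure_diff_of_isPreconnected (hE : IsClosed E) (hU : Convex ℝ U) (hD : IsOpen D)
    (hDcl : closure D ∩ (U \ E) = D) {s : Set X} (hs : IsPreconnected s)
    (hsUE : s ⊆ closure U \ E) {a : X} (has : a ∈ s) (haD : a ∈ closure D) :
    s ⊆ closure D \ E := by
  obtain ⟨O, hO, hDO⟩ := exists_isOpen_closure_diff_eq_inter_closure hE hU hD hDcl
  have mem_closure_iff_mem {x : X} (hx : x ∈ s) : x ∈ closure D ↔ x ∈ O :=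
    ⟨fun hxD ↦ (hDO.subset ⟨hxD, (hsUE hx).2⟩).1, fun hxO ↦ (hDO.superset ⟨hxO, (hsUE hx).1⟩).1⟩
  refine fun x hx ↦ ⟨?_, (hsUE hx).2⟩
  by_contra hxD
  obtain ⟨y, hys, hyO, hyD⟩ := hs O (closure D)ᶜ hO isClosed_closure.isOpen_compl
    (fun y hy ↦ (em (y ∈ closure D)).imp_left (mem_closure_iff_mem hy).1)
    ⟨a, has, (mem_closure_iff_mem has).1 haD⟩ ⟨x, hx, hxD⟩
  exact hyD ((mem_closure_iff_mem hys).2 hyO)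

end Convex

section CrossRatio

/-- The cross ratio `(a, b; z, w)`, normalised so that for four distinct points of a circle it is
negative exactly when the pairs `{a, b}` and `{z, w}` separate each other. -/
def crossRatio {K : Type*} [Field K] (a b z w : K) : K :=
  (a - z) * (b - w) / ((a - w) * (b - z))

lemma circleMap_sub_circleMap (c : ℂ) (R θ φ : ℝ) :
    circleMap c R θ - circleMap c R φ =
      2 * I * R * exp (θ / 2 * I) * exp (φ / 2 * I) * Real.sin ((θ - φ) / 2) := by
  have hθ : exp (θ * I) = exp (θ / 2 * I) * exp (θ / 2 * I) := by rw [← exp_add]; ring_nf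
  have hφ : exp (φ * I) = exp (φ / 2 * I) * exp (φ / 2 * I) := by rw [← exp_add]; ring_nf
  have hneg (x : ℂ) : exp (-x * I) = (exp (x * I))⁻¹ := by rw [neg_mul, exp_neg]
  have hsub : exp ((θ - φ) / 2 * I) = exp (θ / 2 * I) / exp (φ / 2 * I) := by
    rw [← exp_sub]; ring_nf
  rw [ofReal_sin, sin]
  push_cast
  rw [hneg, hsub]
  simp only [circleMap, hθ, hφ]
  field_simp
  rw [I_sq]
  ring

lemma crossRatio_circleMap (c : ℂ) {R : ℝ} (hR : R ≠ 0) (α β ζ ω : ℝ) :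
    crossRatio (circleMap c R α) (circleMap c R β) (circleMap c R ζ) (circleMap c R ω) =
      (Real.sin ((α - ζ) / 2) * Real.sin ((β - ω) / 2) /
        (Real.sin ((α - ω) / 2) * Real.sin ((β - ζ) / 2)) : ℝ) := by
  have hR' : (R : ℂ) ≠ 0 := ofReal_ne_zero.2 hR
  have hexp (θ : ℝ) : exp (θ / 2 * I) ≠ 0 := exp_ne_zero _
  simp only [crossRatio, circleMap_sub_circleMap]
  push_cast
  field_simp [hexp α]

lemma crossRatio_circleMap_neg (c : ℂ) {R : ℝ} (hR : R ≠ 0) {α β ζ ω : ℝ} (hαζ : α < ζ)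
    (hζβ : ζ < β) (hβω : β < ω) (hωα : ω < α + 2 * Real.pi) :
    crossRatio (circleMap c R α) (circleMap c R β) (circleMap c R ζ) (circleMap c R ω) < 0 := by
  have sin_half_neg {x : ℝ} (hx0 : x < 0) (hx : -(2 * Real.pi) < x) : Real.sin (x / 2) < 0 :=
    Real.sin_neg_of_neg_of_neg_pi_lt (by linarith) (by linarith)
  have hβζ : 0 < Real.sin ((β - ζ) / 2) :=
    Real.sin_pos_of_pos_of_lt_pi (by linarith) (by linarith)
  rw [crossRatio_circleMap c hR, ← ofReal_zero, real_lt_real]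
  exact div_neg_of_pos_of_neg
    (mul_pos_of_neg_of_neg (sin_half_neg (by linarith) (by linarith))
      (sin_half_neg (by linarith) (by linarith)))
    (mul_neg_of_neg_of_pos (sin_half_neg (by linarith) (by linarith)) hβζ)

end CrossRatio

section Log

lemma one_sub_mem_slitPlane_of_norm_le_one {q : ℂ} (hq : ‖q‖ ≤ 1) (hq1 : q ≠ 1) :
    1 - q ∈ slitPlane := by
  refine Or.inl ?_
  rw [sub_re, one_re, sub_pos]
  refine ((re_le_norm q).trans hq).lt_of_ne fun hre ↦ hq1 ?_
  have hq0 : 0 ≤ q := re_eq_norm.1 ((re_le_norm q).antisymm (hre ▸ hq))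
  exact Complex.ext hre (nonneg_iff.1 hq0).2.symm

variable {c : ℂ} {R : ℝ}

lemma sub_div_sub_center_mem_slitPlane {x w : ℂ} (hx : x ∈ closedBall c R) (hw : w ∈ sphere c R)
    (hwx : w ≠ x) : (w - x) / (w - c) ∈ slitPlane := by
  rw [mem_closedBall_iff_norm] at hx
  rw [mem_sphere_iff_norm] at hw
  have hwc : w - c ≠ 0 := by
    intro hwc
    rw [hwc, norm_zero] at hw
    rw [← hw, norm_le_zero_iff, sub_eq_zero] at hx
    exact hwx ((sub_eq_zero.1 hwc).trans hx.symm)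
  have hdiv : (w - x) / (w - c) = 1 - (x - c) / (w - c) := by field_simp; ring
  rw [hdiv]
  refine one_sub_mem_slitPlane_of_norm_le_one ?_ fun h ↦ hwx ?_
  · rw [norm_div, hw]
    exact div_le_one_of_le₀ hx (hw ▸ norm_nonneg _)
  · exact (sub_left_injective ((div_eq_one_iff_eq hwc).1 h)).symm

lemma conj_sub_div_sub_center {z a : ℂ} (hz : z ∈ sphere c R) (ha : a ∈ sphere c R)
    (hR : R ≠ 0) : conj ((a - z) / (a - c)) = (z - a) / (z - c) := by
  rw [mem_sphere_iff_norm] at hz ha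
  have hac : a - c ≠ 0 := norm_ne_zero_iff.1 (ha ▸ hR)
  have hzc : z - c ≠ 0 := norm_ne_zero_iff.1 (hz ▸ hR)
  have hinv : conj ((z - c) / (a - c)) = (a - c) / (z - c) := by
    rw [← inv_eq_conj (by rw [norm_div, hz, ha, div_self hR]), inv_div]
  calc conj ((a - z) / (a - c)) = conj (1 - (z - c) / (a - c)) := by congr 1; field_simp; ring
    _ = 1 - (a - c) / (z - c) := by rw [map_sub, map_one, hinv]
    _ = (z - a) / (z - c) := by field_simp; ring

/-- For `a` on the boundary circle of a disk with center `c`, the branch of `x ↦ log (a - x)` on the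
closed disk minus `a` which comes from the principal logarithm, up to the additive constant
`log (a - c)`. -/
noncomputable def boundaryLog (c a x : ℂ) : ℂ :=
  log ((a - x) / (a - c))

lemma conj_boundaryLog {z a : ℂ} (hz : z ∈ sphere c R) (ha : a ∈ sphere c R) (hR : R ≠ 0)
    (haz : a ≠ z) : conj (boundaryLog c a z) = boundaryLog c z a := by
  have hslit := sub_div_sub_center_mem_slitPlane (sphere_subset_closedBall hz) ha haz
  rw [boundaryLog, ← log_conj _ (slitPlane_arg_ne_pi hslit), conj_sub_div_sub_center hz ha hR,
    boundaryLog]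

lemma exp_boundaryLog {a x : ℂ} (ha : a ∈ sphere c R) (hR : R ≠ 0) (hax : a ≠ x) :
    exp (boundaryLog c a x) = (a - x) / (a - c) :=
  exp_log (div_ne_zero (sub_ne_zero.2 hax) (sub_ne_zero.2 (ne_of_mem_sphere ha hR)))

lemma continuous_boundaryLog_comp {X : Type*} [TopologicalSpace X] {a : ℂ} (ha : a ∈ sphere c R)
    {p : X → ℂ} (hp : Continuous p) (hpc : ∀ x, p x ∈ closedBall c R) (hap : ∀ x, a ≠ p x) :
    Continuous fun x ↦ boundaryLog c a (p x) :=
  Continuous.clog (by fun_prop) fun x ↦ sub_div_sub_center_mem_slitPlane (hpc x) ha (hap x)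

lemma sub_eq_boundaryLog_sub_boundaryLog {X : Type*} [TopologicalSpace X] [PreconnectedSpace X]
    {a : ℂ} (ha : a ∈ sphere c R) (hR : R ≠ 0) {g p : X → ℂ} (hg : Continuous g)
    (hp : Continuous p) (hpc : ∀ x, p x ∈ closedBall c R) (hap : ∀ x, a ≠ p x) {k : ℂ}
    (hgp : ∀ x, exp (g x) = k * (a - p x)) (x y : X) :
    g x - g y = boundaryLog c a (p x) - boundaryLog c a (p y) := by
  have hquot (x : X) : exp (g x - boundaryLog c a (p x)) = k * (a - c) := by
    have hsub : a - p x ≠ 0 := sub_ne_zero.2 (hap x)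
    rw [exp_sub, hgp, exp_boundaryLog ha hR (hap x)]
    field_simp
  have hconst : g x - boundaryLog c a (p x) = g y - boundaryLog c a (p y) :=
    isCoveringMap_exp.const_of_comp (hg.sub (continuous_boundaryLog_comp ha hp hpc hap))
      (fun x y ↦ Subtype.ext ((hquot x).trans (hquot y).symm)) x y
  exact sub_eq_sub_iff_sub_eq_sub.1 hconst

lemma exists_exp_eq_of_exp_eq_zero_left {X : Type*} [TopologicalSpace X]
    (H : C(unitInterval × X, ℂ)) (hH : ∀ p, H p ≠ 0) (f : C(X, ℂ))
    (hf : ∀ x, exp (f x) = H (0, x)) :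
    ∃ g : C(unitInterval × X, ℂ), ∀ p, exp (g p) = H p := by
  let H' : C(unitInterval × X, {z : ℂ // z ≠ 0}) := ⟨fun p ↦ ⟨H p, hH p⟩, by fun_prop⟩
  have hH' (x : X) : H' (0, x) = ⟨exp (f x), exp_ne_zero _⟩ := Subtype.ext (hf x).symm
  exact ⟨isCoveringMap_exp.liftHomotopy H' f hH', fun p ↦
    congrArg Subtype.val (congrFun (isCoveringMap_exp.liftHomotopy_lifts H' f hH') p)⟩

lemma exists_exp_eq_path_sub {E : Set ℂ} (hEsub : E ⊆ closedBall c R) {a b : ℂ}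
    (ha : a ∈ sphere c R) (hR : R ≠ 0) (γ : Path a b) (hγE : ∀ s, γ s ∉ E) :
    ∃ g : C(unitInterval × E, ℂ), ∀ p, exp (g p) = γ p.1 - p.2 := by
  have hγx (s : unitInterval) (x : E) : γ s ≠ x := fun h ↦ hγE s (h ▸ x.2)
  have hax (x : E) : a ≠ x := by simpa using hγx 0 x
  have hac : a - c ≠ 0 := sub_ne_zero.2 (ne_of_mem_sphere ha hR)
  refine exists_exp_eq_of_exp_eq_zero_left
    ⟨fun p : unitInterval × E ↦ γ p.1 - p.2, by fun_prop⟩ (fun p ↦ sub_ne_zero.2 (hγx p.1 p.2))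
    ⟨fun x ↦ log (a - c) + boundaryLog c a x, continuous_const.add
      (continuous_boundaryLog_comp ha continuous_subtype_val (fun x ↦ hEsub x.2) hax)⟩ fun x ↦ ?_
  simp only [ContinuousMap.coe_mk, γ.source]
  rw [exp_add, exp_log hac, exp_boundaryLog ha hR (hax x), mul_div_cancel₀ _ hac]

end Log

section Crossing

variable {c : ℂ} {R : ℝ} {E : Set ℂ}

lemma crossRatio_pos_of_exp_eq_sub {P Q : Type*} [TopologicalSpace P] [PreconnectedSpace P]
    [TopologicalSpace Q] [PreconnectedSpace Q] (hR : R ≠ 0) {p : P → ℂ} {q : Q → ℂ}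
    (hp : Continuous p) (hq : Continuous q) (hpc : ∀ s, p s ∈ closedBall c R)
    (hqc : ∀ x, q x ∈ closedBall c R) {g : P × Q → ℂ} (hg : Continuous g)
    (hgpq : ∀ s x, exp (g (s, x)) = p s - q x) {s t : P} (hs : p s ∈ sphere c R)
    (ht : p t ∈ sphere c R) {x y : Q} (hx : q x ∈ sphere c R) (hy : q y ∈ sphere c R) :
    0 < crossRatio (p s) (p t) (q x) (q y) := by
  have hpq (s : P) (x : Q) : p s ≠ q x := sub_ne_zero.1 (hgpq s x ▸ exp_ne_zero _)
  have sub_along_Q {s : P} (hs : p s ∈ sphere c R) :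
      g (s, x) - g (s, y) = boundaryLog c (p s) (q x) - boundaryLog c (p s) (q y) :=
    sub_eq_boundaryLog_sub_boundaryLog hs hR (g := fun x ↦ g (s, x)) (k := 1) (by fun_prop)
      hq hqc (hpq s) (fun x ↦ by rw [hgpq, one_mul]) x y
  have sub_along_P {x : Q} (hx : q x ∈ sphere c R) :
      g (s, x) - g (t, x) = boundaryLog c (q x) (p s) - boundaryLog c (q x) (p t) :=
    sub_eq_boundaryLog_sub_boundaryLog hx hR (g := fun s ↦ g (s, x)) (k := -1) (by fun_prop)
      hp hpc (fun s ↦ (hpq s x).symm) (fun s ↦ by rw [hgpq]; ring) s t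
  have conj_swap {s : P} {x : Q} (hs : p s ∈ sphere c R) (hx : q x ∈ sphere c R) :
      conj (boundaryLog c (p s) (q x)) = boundaryLog c (q x) (p s) :=
    conj_boundaryLog hx hs hR (hpq s x)
  let L : ℂ := g (s, x) - g (s, y) - (g (t, x) - g (t, y))
  have exp_L : exp L = crossRatio (p s) (p t) (q x) (q y) := by
    simp only [L, exp_sub, hgpq, crossRatio]
    rw [div_div_div_eq]
  have conj_L : conj L = L := calc
    conj L = boundaryLog c (q x) (p s) - boundaryLog c (q y) (p s) -
        (boundaryLog c (q x) (p t) - boundaryLog c (q y) (p t)) := by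
      simp only [L, sub_along_Q hs, sub_along_Q ht, map_sub, conj_swap hs hx, conj_swap hs hy,
        conj_swap ht hx, conj_swap ht hy]
    _ = g (s, x) - g (t, x) - (g (s, y) - g (t, y)) := by
      rw [sub_along_P hx, sub_along_P hy, sub_sub_sub_comm]
    _ = L := sub_sub_sub_comm ..
  obtain ⟨r, hr⟩ := conj_eq_iff_real.1 conj_L
  rw [← exp_L, hr, ← ofReal_exp]
  exact zero_lt_real.2 (Real.exp_pos r)

theorem crossRatio_pos_of_joinedIn_closedBall_diff (hE : IsPreconnected E)
    (hEsub : E ⊆ closedBall c R) (hR : R ≠ 0) {a b z w : ℂ} (ha : a ∈ sphere c R)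
    (hb : b ∈ sphere c R) (hz : z ∈ E ∩ sphere c R) (hw : w ∈ E ∩ sphere c R)
    (hab : JoinedIn (closedBall c R \ E) a b) : 0 < crossRatio a b z w := by
  have : PreconnectedSpace E := isPreconnected_iff_preconnectedSpace.1 hE
  obtain ⟨γ, hγ⟩ := hab
  obtain ⟨g, hg⟩ := exists_exp_eq_path_sub hEsub ha hR γ fun s ↦ (hγ s).2
  have hpos := crossRatio_pos_of_exp_eq_sub (s := 0) (t := 1) (x := ⟨z, hz.1⟩) (y := ⟨w, hw.1⟩)
    hR γ.continuous continuous_subtype_val (fun s ↦ (hγ s).1) (fun x : E ↦ hEsub x.2) g.continuous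
    (fun s x ↦ hg (s, x)) (by rwa [γ.source]) (by rwa [γ.target]) hz.2 hw.2
  rwa [γ.source, γ.target] at hpos

lemma joinedIn_sphere_diff_of_forall_circleMap_notMem (hR : 0 ≤ R) {α β : ℝ} (hαβ : α ≤ β)
    (hE : ∀ θ ∈ Icc α β, circleMap c R θ ∉ E) :
    JoinedIn (sphere c R \ E) (circleMap c R α) (circleMap c R β) := by
  have harc : IsPathConnected (circleMap c R '' Icc α β) :=
    ((convex_Icc α β).isPathConnected (nonempty_Icc.2 hαβ)).image (continuous_circleMap c R)
  refine (harc.joinedIn _ (mem_image_of_mem _ (left_mem_Icc.2 hαβ)) _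
    (mem_image_of_mem _ (right_mem_Icc.2 hαβ))).mono ?_
  rintro _ ⟨θ, hθ, rfl⟩
  exact ⟨circleMap_mem_sphere c hR θ, hE θ hθ⟩

lemma joinedIn_sphere_diff_circleMap (hE : IsPreconnected E) (hEsub : E ⊆ closedBall c R)
    (hR : 0 < R) {α β : ℝ} (hαβ : α ≤ β) (hβα : β ≤ α + 2 * Real.pi)
    (h : JoinedIn (closedBall c R \ E) (circleMap c R α) (circleMap c R β)) :
    JoinedIn (sphere c R \ E) (circleMap c R α) (circleMap c R β) := by
  have hper : circleMap c R (α + 2 * Real.pi) = circleMap c R α := periodic_circleMap c R α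
  have ne {θ φ : ℝ} (hθ : circleMap c R θ ∈ E) (hφ : circleMap c R φ ∉ E) : θ ≠ φ :=
    fun heq ↦ hφ (heq ▸ hθ)
  by_contra hnot
  obtain ⟨ζ, ⟨hαζ, hζβ⟩, hζE⟩ : ∃ θ ∈ Icc α β, circleMap c R θ ∈ E := by
    by_contra! hdisj
    exact hnot (joinedIn_sphere_diff_of_forall_circleMap_notMem hR.le hαβ hdisj)
  obtain ⟨ω, ⟨hβω, hωα⟩, hωE⟩ : ∃ θ ∈ Icc β (α + 2 * Real.pi), circleMap c R θ ∈ E := by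
    by_contra! hdisj
    exact hnot (hper ▸ joinedIn_sphere_diff_of_forall_circleMap_notMem hR.le hβα hdisj).symm
  have hmem (θ : ℝ) : circleMap c R θ ∈ sphere c R := circleMap_mem_sphere c hR.le θ
  refine lt_asymm (crossRatio_pos_of_joinedIn_closedBall_diff hE hEsub hR.ne' (hmem α) (hmem β)
    ⟨hζE, hmem ζ⟩ ⟨hωE, hmem ω⟩ h) (crossRatio_circleMap_neg c hR.ne' ?_ ?_ ?_ ?_)
  · exact hαζ.lt_of_ne (ne hζE h.source_mem.2).symm
  · exact hζβ.lt_of_ne (ne hζE h.target_mem.2)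
  · exact hβω.lt_of_ne (ne hωE h.target_mem.2).symm
  · exact hωα.lt_of_ne (ne hωE (hper ▸ h.source_mem.2))

theorem joinedIn_sphere_diff_of_joinedIn_closedBall_diff (hE : IsPreconnected E)
    (hEsub : E ⊆ closedBall c R) (hR : 0 < R) {a b : ℂ} (ha : a ∈ sphere c R)
    (hb : b ∈ sphere c R) (h : JoinedIn (closedBall c R \ E) a b) :
    JoinedIn (sphere c R \ E) a b := by
  rw [← abs_of_pos hR, ← image_circleMap_Ioc] at ha hb
  obtain ⟨α, ⟨hα, hα'⟩, rfl⟩ := ha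
  obtain ⟨β, ⟨hβ, hβ'⟩, rfl⟩ := hb
  rcases le_total α β with hαβ | hβα
  · exact joinedIn_sphere_diff_circleMap hE hEsub hR hαβ (by linarith) h
  · exact (joinedIn_sphere_diff_circleMap hE hEsub hR hβα (by linarith) h.symm).symm

lemma isPreconnected_frontier_diff (hE : IsClosed E) (hEconn : IsPreconnected E)
    (hEsub : E ⊆ closedBall c R) (hR : 0 < R) {D : Set ℂ} (hD : IsOpen D) (hDconn : IsConnected D)
    (hDcl : closure D ∩ (ball c R \ E) = D) : IsPreconnected (frontier D \ E) := by
  rw [frontier_diff_eq_closure_diff_inter_frontier hD hDcl isOpen_ball, frontier_ball c hR.ne']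
  have hDball : closure D ⊆ closedBall c R :=
    closure_minimal (fun x hx ↦ ball_subset_closedBall (hDcl.superset hx).2.1) isClosed_closedBall
  refine isPreconnected_of_forall_pair fun a ⟨haD, ha⟩ b ⟨hbD, hb⟩ ↦ ?_
  have hab : JoinedIn (closure D \ E) a b :=
    (isPathConnected_closure_diff hE (convex_ball c R) hD hDconn hDcl).joinedIn a haD b hbD
  obtain ⟨γ, hγ⟩ := joinedIn_sphere_diff_of_joinedIn_closedBall_diff hEconn hEsub hR ha hb
    (hab.mono (sdiff_subset_sdiff_left hDball))
  have hγrange : range γ ⊆ sphere c R \ E := range_subset_iff.2 hγ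
  have hγconn : IsPreconnected (range γ) := isPreconnected_range γ.continuous
  refine ⟨range γ, subset_inter ?_ (hγrange.trans sdiff_subset), γ.source_mem_range,
    γ.target_mem_range, hγconn⟩
  refine subset_closure_diff_of_isPreconnected hE (convex_ball c R) hD hDcl hγconn ?_
    γ.source_mem_range haD.1
  rw [closure_ball c hR.ne']
  exact hγrange.trans (sdiff_subset_sdiff_left sphere_subset_closedBall)

end Crossing

theorem frontier_diff_is_open_arc_general {ι : Type*} {c : ℂ} {R : ℝ} (hR : 0 < R) {E : Set ℂ}
    (hE : IsClosed E) (hEconn : IsPreconnected E) (hEsub : E ⊆ closedBall c R) {D : ι → Set ℂ}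
    (hDdisj : Pairwise (Function.onFun Disjoint D)) (hDopen : ∀ k, IsOpen (D k))
    (hDconn : ∀ k, IsConnected (D k)) (hDunion : ⋃ k, D k = ball c R \ E) (k : ι) :
    frontier (D k) \ E ⊆ sphere c R ∧
      (∃ U : Set ℂ, IsOpen U ∧ frontier (D k) \ E = U ∩ sphere c R) ∧
      IsPreconnected (frontier (D k) \ E) := by
  have hDcl : closure (D k) ∩ (ball c R \ E) = D k :=
    hDunion ▸ closure_inter_iUnion_of_pairwise_disjoint hDopen hDdisj k
  have hfrontier : frontier (D k) \ E = (closure (D k) \ E) ∩ sphere c R := by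
    rw [frontier_diff_eq_closure_diff_inter_frontier (hDopen k) hDcl isOpen_ball,
      frontier_ball c hR.ne']
  obtain ⟨U, hU, hDU⟩ := exists_isOpen_closure_diff_eq_inter_closure hE (convex_ball c R)
    (hDopen k) hDcl
  refine ⟨hfrontier ▸ inter_subset_right, ⟨U, hU, ?_⟩,
    isPreconnected_frontier_diff hE hEconn hEsub hR (hDopen k) (hDconn k) hDcl⟩
  rw [hfrontier, hDU, closure_ball c hR.ne', inter_assoc,
    inter_eq_right.2 sphere_subset_closedBall]

/-- The set `α k = frontier (D k) \ E` is contained in the unit circle `T`, is open in the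
subspace topology of `T`, and is connected — hence a single (possibly empty) open arc. -/
theorem frontier_diff_is_open_arc (n : ℕ) (hn : 2 ≤ n) (E : Set ℂ)
    (hEcompact : IsCompact E) (hEconn : IsConnected E)
    (hEsub : E ⊆ closedBall (0 : ℂ) 1)
    (D : Fin n → Set ℂ)
    (hDdisj : ∀ i j : Fin n, i ≠ j → Disjoint (D i) (D j))
    (hDne : ∀ k, (D k).Nonempty)
    (hDopen : ∀ k, IsOpen (D k))
    (hDconn : ∀ k, IsConnected (D k))
    (hDunion : (⋃ k, D k) = ball (0 : ℂ) 1 \ E) :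
    ∀ k : Fin n,
      frontier (D k) \ E ⊆ sphere (0 : ℂ) 1 ∧
      (∃ U : Set ℂ, IsOpen U ∧ frontier (D k) \ E = U ∩ sphere (0 : ℂ) 1) ∧
      IsPreconnected (frontier (D k) \ E) :=
  frontier_diff_is_open_arc_general one_pos hEcompact.isClosed hEconn.isPreconnected hEsub
    (fun i j ↦ hDdisj i j) hDopen hDconn hDunion
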